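/- Let K be a compact Hausdorff space with a retractional skeleton. Then: (i) every subset of K which is the closure of an arbitrary union of Gδ subsets of K has a retractional skeleton (as a compact space with the subspace topology); (ii) every set of the form G = ⋂_{n∈ℕ} cl(U_n), with each U_n open in K and cl denoting closure in K, has a retractional skeleton. -/

import Mathlib

/-!
Let `D = ⋃ s, r s [K]` be the set induced by the skeleton. The proof restricts the skeleton to the
subset in question, keeping only the indices `s` whose retraction maps the subset into itself.

The core is `exists_ge_mapsTo`: if `F 0, F 1, …` are closed sets with `F n ∩ D` dense in `F n`, then
the indices `s` with `r s [F n] ⊆ F n` for all `n` are cofinal. Since `r s [K]` is compact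
metrizable, some countable `C ⊆ D` has `r s [C ∩ F n]` dense in `r s [F n]` for every `n`; countable
subsets of `D` lie in a single range, so there is `s' ≥ s` with
`r s [F n] = r s [F n ∩ r s' [K]]` (`exists_next`). Iterating and taking the supremum `t`, a
compactness argument shows `r t x ∈ F n` for `x ∈ F n`. These indices are clearly closed under
suprema of increasing sequences, so they index a retractional skeleton on `⋂ n, F n`.

Both parts follow once density is known. A point `x` of a Gδ set `⋂ n, V n` and a neighbourhood `W`
of `x` admit `s n` with `r s x ∈ V n ∩ W` for `s ≥ s n`, so any `t` above all `s n` gives a point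
`r t x ∈ D ∩ W ∩ ⋂ n, V n`. Hence `D` is dense in unions of Gδ sets, in particular in open sets, and
the core applies to a constant sequence and to `F n = closure (U n)` respectively.
-/

open Filter Topology TopologicalSpace Set

universe u v

/-- A retractional skeleton in a topological space `K`: a family `r s : C(K, K)` of continuous
retractions indexed by an up-directed (nonempty) partially ordered set `Γ` such that
(i) each `r s` has metrizable range and the net `(r s x)` converges to `x`;
(ii) `s ≤ t` implies `r s ∘ r t = r t ∘ r s = r s`;
(iii) each strictly increasing sequence has a supremum `t` and `r t x = lim_n r (f n) x`. -/
structure RetractionalSkeleton (K : Type u) [TopologicalSpace K] : Type (u + 1) where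
  Γ : Type u
  [po : PartialOrder Γ]
  [ne : Nonempty Γ]
  directed : ∀ s t : Γ, ∃ w, s ≤ w ∧ t ≤ w
  r : Γ → C(K, K)
  isRetraction : ∀ s, ∀ x : K, r s (r s x) = r s x
  metrizable : ∀ s, MetrizableSpace ↥(Set.range (r s))
  tendsto_id : ∀ x : K, Tendsto (fun s => r s x) atTop (𝓝 x)
  comp_eq_of_le : ∀ s t : Γ, s ≤ t → ∀ x : K, r s (r t x) = r s x ∧ r t (r s x) = r s x
  sup_seq : ∀ f : ℕ → Γ, StrictMono f → ∃ t : Γ, IsLUB (Set.range f) t ∧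
    ∀ x : K, Tendsto (fun n => r (f n) x) atTop (𝓝 (r t x))

/-- The set `D(𝔰) = ⋃ s, r s [K]` induced by a retractional skeleton. -/
def RetractionalSkeleton.inducedSet {K : Type u} [TopologicalSpace K]
    (𝔰 : RetractionalSkeleton K) : Set K := ⋃ s, Set.range (𝔰.r s)

/-- `D` is induced by an r-skeleton in `K`. -/
def IsInducedByRSkeleton {K : Type u} [TopologicalSpace K] (D : Set K) : Prop :=
  ∃ 𝔰 : RetractionalSkeleton K, 𝔰.inducedSet = D

/-- `K` has a retractional skeleton. -/
def HasRetractionalSkeleton (K : Type u) [TopologicalSpace K] : Prop :=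
  Nonempty (RetractionalSkeleton K)

namespace RetractionalSkeleton

attribute [instance] RetractionalSkeleton.po RetractionalSkeleton.ne

variable {K : Type u} [TopologicalSpace K] (𝔰 : RetractionalSkeleton K)

/-- Extension of property (iii) to weakly increasing sequences. Convergence is asserted only along
some indices `f (φ n)`, with `φ` constant when `f` is eventually constant. -/
lemma sup_seq_mono (f : ℕ → 𝔰.Γ) (hf : Monotone f) :
    ∃ t : 𝔰.Γ, IsLUB (Set.range f) t ∧ ∃ φ : ℕ → ℕ,
      ∀ x : K, Tendsto (fun n => 𝔰.r (f (φ n)) x) atTop (𝓝 (𝔰.r t x)) := by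
  by_cases h : ∃ N, ∀ n, N ≤ n → f n = f N
  · obtain ⟨N, hN⟩ := h
    refine ⟨f N, ⟨?_, fun b hb => hb ⟨N, rfl⟩⟩, fun _ => N, fun x => tendsto_const_nhds⟩
    rintro _ ⟨n, rfl⟩
    rcases le_total N n with h | h
    · exact (hN n h).le
    · exact hf h
  · push Not at h
    have h' : ∀ N, ∃ n, N < n ∧ f N < f n := by
      intro N
      obtain ⟨n, hn, hne⟩ := h N
      refine ⟨n, lt_of_le_of_ne hn ?_, lt_of_le_of_ne (hf hn) (Ne.symm hne)⟩
      rintro rfl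
      exact hne rfl
    choose g hg hfg using h'
    let φ : ℕ → ℕ := fun n => g^[n] 0
    have hφs : ∀ n, φ (n + 1) = g (φ n) := fun n => Function.iterate_succ_apply' g n 0
    have hφ : StrictMono φ := strictMono_nat_of_lt_succ fun n => by rw [hφs]; exact hg _
    have hfφ : StrictMono (fun n => f (φ n)) :=
      strictMono_nat_of_lt_succ fun n => by simp only [hφs]; exact hfg _
    obtain ⟨t, ht, hlim⟩ := 𝔰.sup_seq _ hfφ
    refine ⟨t, ⟨?_, fun b hb => ht.2 ?_⟩, φ, hlim⟩
    · rintro _ ⟨n, rfl⟩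
      exact (hf (hφ.id_le n)).trans (ht.1 ⟨n, rfl⟩)
    · rintro _ ⟨n, rfl⟩
      exact hb ⟨φ n, rfl⟩

lemma exists_upper_bound (g : ℕ → 𝔰.Γ) : ∃ t, ∀ n, g n ≤ t := by
  choose w hw₁ hw₂ using 𝔰.directed
  let f : ℕ → 𝔰.Γ := fun n => Nat.rec (g 0) (fun k a => w a (g (k + 1))) n
  have hf : Monotone f := monotone_nat_of_le_succ fun n => hw₁ _ _
  obtain ⟨t, ht, -⟩ := 𝔰.sup_seq_mono f hf
  refine ⟨t, fun n => le_trans ?_ (ht.1 ⟨n, rfl⟩)⟩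
  cases n with
  | zero => exact le_rfl
  | succ k => exact hw₂ _ _

lemma mem_inducedSet {x : K} : x ∈ 𝔰.inducedSet ↔ ∃ s, 𝔰.r s x = x := by
  simp only [inducedSet, mem_iUnion, mem_range]
  constructor
  · rintro ⟨s, y, rfl⟩
    exact ⟨s, 𝔰.isRetraction s y⟩
  · rintro ⟨s, hs⟩
    exact ⟨s, x, hs⟩

lemma fixed_mono {s t : 𝔰.Γ} (h : s ≤ t) {x : K} (hx : 𝔰.r s x = x) : 𝔰.r t x = x := by
  have := (𝔰.comp_eq_of_le s t h x).2
  rwa [hx] at this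

lemma exists_fixing_countable (s : 𝔰.Γ) {C : Set K} (hC : C.Countable)
    (hCD : C ⊆ 𝔰.inducedSet) : ∃ t, s ≤ t ∧ ∀ x ∈ C, 𝔰.r t x = x := by
  rcases C.eq_empty_or_nonempty with rfl | hne
  · exact ⟨s, le_rfl, by simp⟩
  obtain ⟨c, rfl⟩ := hC.exists_eq_range hne
  have h : ∀ n, ∃ a, 𝔰.r a (c n) = c n := fun n => 𝔰.mem_inducedSet.1 (hCD ⟨n, rfl⟩)
  choose a ha using h
  obtain ⟨t₀, ht₀⟩ := 𝔰.exists_upper_bound a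
  obtain ⟨t, hst, ht⟩ := 𝔰.directed s t₀
  refine ⟨t, hst, ?_⟩
  rintro _ ⟨n, rfl⟩
  exact 𝔰.fixed_mono ((ht₀ n).trans ht) (ha n)

/-- `D` is dense in every Gδ set. -/
lemma subset_closure_of_isGδ {G : Set K} (hG : IsGδ G) : G ⊆ closure (G ∩ 𝔰.inducedSet) := by
  intro x hx
  obtain ⟨V, hV, rfl⟩ := hG.eq_iInter_nat
  rw [mem_closure_iff]
  intro W hW hxW
  have : IsDirected 𝔰.Γ (· ≤ ·) := ⟨𝔰.directed⟩
  have h : ∀ n, ∃ s, ∀ t, s ≤ t → 𝔰.r t x ∈ V n ∩ W := by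
    intro n
    exact eventually_atTop.1
      ((𝔰.tendsto_id x).eventually (((hV n).inter hW).mem_nhds ⟨mem_iInter.1 hx n, hxW⟩))
  choose s hs using h
  obtain ⟨t, ht⟩ := 𝔰.exists_upper_bound s
  exact ⟨𝔰.r t x, (hs 0 t (ht 0)).2, mem_iInter.2 fun n => (hs n t (ht n)).1,
    𝔰.mem_inducedSet.2 ⟨t, 𝔰.isRetraction t x⟩⟩

variable [CompactSpace K]

/-- The range of `r s` is hereditarily separable, being compact metrizable. -/
lemma exists_countable_dense_image (s : 𝔰.Γ) (A : Set K) :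
    ∃ C ⊆ A, C.Countable ∧
      Set.rangeFactorization (𝔰.r s) '' A ⊆ closure (Set.rangeFactorization (𝔰.r s) '' C) := by
  have := 𝔰.metrizable s
  let _ := metrizableSpaceMetric (Set.range (𝔰.r s))
  have : CompactSpace (Set.range (𝔰.r s)) :=
    isCompact_iff_compactSpace.1 (isCompact_range (𝔰.r s).continuous)
  obtain ⟨B, hBA, hBc, hB⟩ := (IsSeparable.of_separableSpace
    (Set.rangeFactorization (𝔰.r s) '' A)).exists_countable_dense_subset
  obtain ⟨C, hCA, hC⟩ := exists_subset_bijOn (A ∩ Set.rangeFactorization (𝔰.r s) ⁻¹' B)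
    (Set.rangeFactorization (𝔰.r s))
  rw [image_inter_preimage, inter_eq_self_of_subset_right hBA] at hC
  refine ⟨C, hCA.trans inter_subset_left, hC.mapsTo.countable_of_injOn hC.injOn hBc, ?_⟩
  rwa [hC.image_eq]

variable [T2Space K]

/-- One step of the closing-off argument: above each `s` there is `s'` such that
`r s [F n] = r s [F n ∩ r s' [K]]` for every `n`. -/
lemma exists_next (F : ℕ → Set K) (hF : ∀ n, IsClosed (F n))
    (hD : ∀ n, F n ⊆ closure (F n ∩ 𝔰.inducedSet)) (s : 𝔰.Γ) :
    ∃ s', s ≤ s' ∧ ∀ n, ∀ x ∈ F n, ∃ y ∈ F n, 𝔰.r s' y = y ∧ 𝔰.r s y = 𝔰.r s x := by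
  choose C hC hCc hCd using fun n => 𝔰.exists_countable_dense_image s (F n ∩ 𝔰.inducedSet)
  obtain ⟨s', hss', hs'⟩ := 𝔰.exists_fixing_countable s (Set.countable_iUnion hCc)
    (iUnion_subset fun n => (hC n).trans inter_subset_right)
  refine ⟨s', hss', fun n x hx => ?_⟩
  have hρ : Continuous (Set.rangeFactorization (𝔰.r s)) :=
    (𝔰.r s).continuous.subtype_mk _
  have hcl : IsClosed (Set.rangeFactorization (𝔰.r s) '' (F n ∩ {y | 𝔰.r s' y = y})) :=
    (((hF n).inter (isClosed_eq (𝔰.r s').continuous continuous_id)).isCompact.image hρ).isClosed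
  have h1 : Set.rangeFactorization (𝔰.r s) x ∈
      closure (Set.rangeFactorization (𝔰.r s) '' (F n ∩ 𝔰.inducedSet)) :=
    image_closure_subset_closure_image hρ ⟨x, hD n hx, rfl⟩
  have h2 := closure_minimal (hCd n) isClosed_closure h1
  have hCF : C n ⊆ F n ∩ {y | 𝔰.r s' y = y} := fun y hy =>
    ⟨(hC n hy).1, hs' y (mem_iUnion.2 ⟨n, hy⟩)⟩
  obtain ⟨y, ⟨hyF, hy⟩, hyx⟩ := closure_minimal (image_mono hCF) hcl h2
  exact ⟨y, hyF, hy, congrArg Subtype.val hyx⟩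

/-- The indices whose retraction preserves every `F n` are cofinal. -/
lemma exists_ge_mapsTo (F : ℕ → Set K) (hF : ∀ n, IsClosed (F n))
    (hD : ∀ n, F n ⊆ closure (F n ∩ 𝔰.inducedSet)) (s : 𝔰.Γ) :
    ∃ t, s ≤ t ∧ ∀ n, ∀ x ∈ F n, 𝔰.r t x ∈ F n := by
  choose next hle hnext using 𝔰.exists_next F hF hD
  let f : ℕ → 𝔰.Γ := fun n => next^[n] s
  have hfs : ∀ n, f (n + 1) = next (f n) := fun n => Function.iterate_succ_apply' next n s
  have hf : Monotone f := monotone_nat_of_le_succ fun n => by rw [hfs]; exact hle _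
  obtain ⟨t, ht, φ, hlim⟩ := 𝔰.sup_seq_mono f hf
  refine ⟨t, ht.1 ⟨0, rfl⟩, fun n x hx => ?_⟩
  -- A point common to all the sets `Z k` has the same images under each `r (f k)` as `x`, and it is
  -- fixed by `r t`; therefore it equals `r t x`.
  let Z : ℕ → Set K := fun k => F n ∩ {y | 𝔰.r t y = y} ∩ {y | 𝔰.r (f k) y = 𝔰.r (f k) x}
  have hZc : ∀ k, IsClosed (Z k) := fun k =>
    ((hF n).inter (isClosed_eq (𝔰.r t).continuous continuous_id)).inter
      (isClosed_eq (𝔰.r (f k)).continuous continuous_const)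
  have hZ : (⋂ k, Z k).Nonempty := by
    refine IsCompact.nonempty_iInter_of_sequence_nonempty_isCompact_isClosed Z ?_ ?_
      (hZc 0).isCompact hZc
    · rintro k y ⟨hy, hyk⟩
      refine ⟨hy, ?_⟩
      have hyk' : 𝔰.r (f (k + 1)) y = 𝔰.r (f (k + 1)) x := hyk
      have hk := 𝔰.comp_eq_of_le _ _ (hf (Nat.le_succ k))
      change 𝔰.r (f k) y = 𝔰.r (f k) x
      rw [← (hk y).1, ← (hk x).1, hyk']
    · intro k
      obtain ⟨y, hyF, hy, hyx⟩ := hnext (f k) n x hx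
      exact ⟨y, ⟨hyF, 𝔰.fixed_mono (ht.1 ⟨k + 1, hfs k⟩) hy⟩, hyx⟩
  obtain ⟨y, hy⟩ := hZ
  rw [mem_iInter] at hy
  have hlim' := hlim x
  rw [← show (fun k => 𝔰.r (f (φ k)) y) = fun k => 𝔰.r (f (φ k)) x from
    funext fun k => (hy (φ k)).2] at hlim'
  have : 𝔰.r t y = 𝔰.r t x := tendsto_nhds_unique (hlim y) hlim'
  rw [← this, (hy 0).1.2]
  exact (hy 0).1.1

/-- The skeleton on `S = ⋂ n, F n` consists of the restrictions to `S` of those `r s` that preserve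
every `F n`. -/
lemma hasRetractionalSkeleton_of_eq_iInter (F : ℕ → Set K) (hF : ∀ n, IsClosed (F n))
    (hD : ∀ n, F n ⊆ closure (F n ∩ 𝔰.inducedSet)) {S : Set K} (hS : S = ⋂ n, F n) :
    HasRetractionalSkeleton S := by
  subst hS
  have hcof := 𝔰.exists_ge_mapsTo F hF hD
  let Γ' : Type u := {s : 𝔰.Γ // ∀ n, ∀ x ∈ F n, 𝔰.r s x ∈ F n}
  have hmaps : ∀ (s : Γ') (x : ⋂ n, F n), 𝔰.r s.1 x ∈ ⋂ n, F n := by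
    intro s x
    exact mem_iInter.2 fun n => s.2 n _ (mem_iInter.1 x.2 n)
  have hne : Nonempty Γ' := by
    obtain ⟨t, -, ht⟩ := hcof (Classical.arbitrary 𝔰.Γ)
    exact ⟨⟨t, ht⟩⟩
  have hdir : ∀ s t : Γ', ∃ w : Γ', s ≤ w ∧ t ≤ w := by
    intro s t
    obtain ⟨w, hsw, htw⟩ := 𝔰.directed s.1 t.1
    obtain ⟨w', hww', hw'⟩ := hcof w
    exact ⟨⟨w', hw'⟩, hsw.trans hww', htw.trans hww'⟩
  refine ⟨{ Γ := Γ'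
            po := inferInstance
            ne := hne
            directed := hdir
            r := fun s => ⟨fun x => ⟨𝔰.r s.1 x, hmaps s x⟩, by fun_prop⟩
            isRetraction := fun s x => Subtype.ext (𝔰.isRetraction s.1 x)
            metrizable := ?_
            tendsto_id := ?_
            comp_eq_of_le := fun s t h x => ⟨Subtype.ext (𝔰.comp_eq_of_le s.1 t.1 h x).1,
              Subtype.ext (𝔰.comp_eq_of_le s.1 t.1 h x).2⟩
            sup_seq := ?_ }⟩
  · intro s
    have := 𝔰.metrizable s.1
    let e : Set.range (fun x : ⋂ n, F n => (⟨𝔰.r s.1 x, hmaps s x⟩ : ⋂ n, F n)) →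
        Set.range (𝔰.r s.1) :=
      fun y => ⟨y.1.1, by obtain ⟨_, x, rfl⟩ := y; exact ⟨x, rfl⟩⟩
    have he : IsEmbedding e := by
      refine IsEmbedding.of_comp (by fun_prop) continuous_subtype_val ?_
      change IsEmbedding ((Subtype.val : (⋂ n, F n) → K) ∘ Subtype.val)
      exact IsEmbedding.subtypeVal.comp IsEmbedding.subtypeVal
    exact he.metrizableSpace
  · intro x
    have : IsDirected 𝔰.Γ (· ≤ ·) := ⟨𝔰.directed⟩
    rw [tendsto_subtype_rng]
    refine (𝔰.tendsto_id x).comp (tendsto_atTop.2 fun s => ?_)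
    obtain ⟨t, hst, ht⟩ := hcof s
    filter_upwards [eventually_ge_atTop (⟨t, ht⟩ : Γ')] with w hw
    exact hst.trans hw
  · intro f hf
    obtain ⟨t, ht, hlim⟩ := 𝔰.sup_seq (fun n => (f n).1) (fun _ _ h => hf h)
    have htF : ∀ n, ∀ x ∈ F n, 𝔰.r t x ∈ F n := fun n x hx =>
      (hF n).mem_of_tendsto (hlim x) (Eventually.of_forall fun k => (f k).2 n x hx)
    refine ⟨⟨t, htF⟩, ⟨?_, fun b hb => ht.2 ?_⟩, fun x => ?_⟩
    · rintro _ ⟨n, rfl⟩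
      exact ht.1 ⟨n, rfl⟩
    · rintro _ ⟨n, rfl⟩
      exact hb ⟨n, rfl⟩
    · rw [tendsto_subtype_rng]
      exact hlim x

end RetractionalSkeleton

/-- Let `K` be a compact Hausdorff space with a retractional skeleton. Then (i) the closure
of any union of Gδ subsets of `K` has a retractional skeleton, and (ii) any set of the form
`⋂ n, closure (U n)` with each `U n` open has a retractional skeleton. -/
theorem hasRetractionalSkeleton_hereditary (K : Type u) [TopologicalSpace K]
    [CompactSpace K] [T2Space K] (hK : HasRetractionalSkeleton K) :
    (∀ (ι : Type u) (G : ι → Set K), (∀ i, IsGδ (G i)) →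
      HasRetractionalSkeleton ↥(closure (⋃ i, G i))) ∧
    (∀ U : ℕ → Set K, (∀ n, IsOpen (U n)) →
      HasRetractionalSkeleton ↥(⋂ n, closure (U n))) := by
  obtain ⟨𝔰⟩ := hK
  constructor
  · intro ι G hG
    refine 𝔰.hasRetractionalSkeleton_of_eq_iInter (fun _ => closure (⋃ i, G i))
      (fun _ => isClosed_closure) (fun _ => ?_) (iInter_const _).symm
    refine closure_minimal (iUnion_subset fun i => ?_) isClosed_closure
    exact (𝔰.subset_closure_of_isGδ (hG i)).trans (closure_mono (inter_subset_inter_left _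
      ((subset_iUnion G i).trans subset_closure)))
  · intro U hU
    refine 𝔰.hasRetractionalSkeleton_of_eq_iInter (fun n => closure (U n))
      (fun _ => isClosed_closure) (fun n => ?_) rfl
    refine closure_minimal ?_ isClosed_closure
    exact (𝔰.subset_closure_of_isGδ (hU n).isGδ).trans
      (closure_mono (inter_subset_inter_left _ subset_closure))
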